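/- For all t, x, y > 0 with xy ≤ t and y² ≥ 4t, the partial derivative of p in the second variable satisfies (1/12)·x·(y/t)²·p(t,x,y) ≤ ∂p/∂x (t,x,y) ≤ 2·x·(y/t)²·p(t,x,y). -/

import Mathlib

open Real MeasureTheory

/-- Modified Bessel function of the first kind, order 0. -/
noncomputable def I0 (z : ℝ) : ℝ := ∑' n : ℕ, (z/2)^(2*n) / ((n.factorial : ℝ))^2

/-- Modified Bessel function of the first kind, order 1. -/
noncomputable def I1 (z : ℝ) : ℝ :=
  ∑' n : ℕ, (z/2)^(2*n+1) / ((n.factorial : ℝ) * ((n+1).factorial : ℝ))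

/-- Heat kernel of the Bessel operator `d²/dx² + (1/x) d/dx` on `(0,∞)`
with respect to the measure `y dy`. -/
noncomputable def pk (t x y : ℝ) : ℝ :=
  t⁻¹ * Real.exp (-(x^2 + y^2)/(2*t)) * I0 (x*y/t)

/-- The function `h` from (AC): Dirichlet heat kernel of `(1/2) d²/dx²` on `(1,∞)`
multiplied by `(xy)⁻¹`. -/
noncomputable def hker (t x y : ℝ) : ℝ :=
  (2*Real.pi*t)^(-(1:ℝ)/2) * (x*y)⁻¹ *
    (Real.exp (-(x-y)^2/(2*t)) - Real.exp (-(x+y-2)^2/(2*t)))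


lemma summable_inv_fact : Summable (fun n : ℕ => 1 / (n.factorial : ℝ)) := by
  simpa using Real.summable_pow_div_factorial 1

lemma fact_one_le (n : ℕ) : (1:ℝ) ≤ (n.factorial : ℝ) := by
  exact_mod_cast Nat.succ_le_of_lt n.factorial_pos

lemma summable_I0 {z : ℝ} (hz : 0 ≤ z) (hz2 : z ≤ 2) :
    Summable (fun n : ℕ => (z/2)^(2*n) / ((n.factorial : ℝ))^2) := by
  refine Summable.of_nonneg_of_le (fun n => by positivity) (fun n => ?_) summable_inv_fact
  have h1 := fact_one_le n
  have h2 : (z/2)^(2*n) ≤ 1 := pow_le_one₀ (by positivity) (by linarith)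
  apply div_le_div₀ (by norm_num) h2 (by positivity)
  nlinarith

lemma I1_term_le {z : ℝ} (hz : 0 ≤ z) (n : ℕ) :
    (z/2)^(2*n+1) / ((n.factorial : ℝ) * ((n+1).factorial : ℝ))
      ≤ (z/2) * ((z/2)^(2*n) / ((n.factorial : ℝ))^2) := by
  have h1 := fact_one_le n
  have h3 : (n.factorial : ℝ) ≤ ((n+1).factorial : ℝ) := by
    exact_mod_cast Nat.factorial_le (Nat.le_succ n)
  rw [← mul_div_assoc, ← pow_succ']
  apply div_le_div_of_nonneg_left (by positivity) (by positivity)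
  nlinarith

lemma summable_I1 {z : ℝ} (hz : 0 ≤ z) (hz2 : z ≤ 2) :
    Summable (fun n : ℕ => (z/2)^(2*n+1) / ((n.factorial : ℝ) * ((n+1).factorial : ℝ))) :=
  Summable.of_nonneg_of_le (fun n => by positivity) (I1_term_le hz)
    ((summable_I0 hz hz2).mul_left (z/2))

lemma I1_le {z : ℝ} (hz : 0 ≤ z) (hz2 : z ≤ 2) : I1 z ≤ (z/2) * I0 z := by
  unfold I1 I0
  rw [← tsum_mul_left]
  exact (summable_I1 hz hz2).tsum_le_tsum (I1_term_le hz) ((summable_I0 hz hz2).mul_left (z/2))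

lemma le_I1 {z : ℝ} (hz : 0 ≤ z) (hz2 : z ≤ 2) : z/2 ≤ I1 z := by
  have h := (summable_I1 hz hz2).le_tsum 0 (fun n _ => by positivity)
  simpa [I1] using h

lemma I0_le {z : ℝ} (hz : 0 ≤ z) (hz1 : z ≤ 1) : I0 z ≤ 4/3 := by
  have h := (summable_I0 hz (by linarith)).tsum_le_tsum
    (g := fun n : ℕ => ((1:ℝ)/4)^n) (fun n => ?_)
    (summable_geometric_of_lt_one (by norm_num) (by norm_num))
  · rw [tsum_geometric_of_lt_one (by norm_num) (by norm_num)] at h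
    unfold I0
    norm_num at h ⊢
    exact h
  · have h1 := fact_one_le n
    have h2 : (z/2)^(2*n) ≤ (1/4)^n := by
      rw [pow_mul]
      apply pow_le_pow_left₀ (by positivity)
      nlinarith
    apply (div_le_self (by positivity) _).trans h2
    nlinarith

lemma I0_nonneg (z : ℝ) : 0 ≤ I0 z :=
  tsum_nonneg (fun n => by rw [pow_mul]; positivity)

lemma hasDerivAt_I0 {z : ℝ} (hz : 0 ≤ z) (hz2 : z < 2) : HasDerivAt I0 (I1 z) z := by
  have key := hasDerivAt_tsum_of_isPreconnected
    (g := fun (n : ℕ) (w : ℝ) => (w/2)^(2*n) / ((n.factorial : ℝ))^2)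
    (g' := fun (n : ℕ) (w : ℝ) => n * (w/2)^(2*n-1) / ((n.factorial : ℝ))^2)
    (t := Metric.ball (0:ℝ) 2) (y₀ := 0) (y := z)
    summable_inv_fact Metric.isOpen_ball (convex_ball _ _).isPreconnected
    (fun n w _ => ?_) (fun n w hw => ?_) (by simp) (summable_I0 le_rfl (by norm_num))
    (by simp [abs_of_nonneg hz, hz2])
  · have hs : I1 z = ∑' n : ℕ, (n:ℝ) * (z/2)^(2*n-1) / ((n.factorial : ℝ))^2 := by
      have e : ∀ n : ℕ, ((n+1 : ℕ):ℝ) * (z/2)^(2*(n+1)-1) / (((n+1).factorial : ℝ))^2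
          = (z/2)^(2*n+1) / ((n.factorial : ℝ) * ((n+1).factorial : ℝ)) := by
        intro n
        have h1 := fact_one_le n
        rw [show 2*(n+1)-1 = 2*n+1 by omega, Nat.factorial_succ]
        push_cast
        field_simp
      have hsum : Summable (fun n : ℕ => (n:ℝ) * (z/2)^(2*n-1) / ((n.factorial : ℝ))^2) := by
        rw [← summable_nat_add_iff 1]
        simp only [e]
        exact summable_I1 hz hz2.le
      rw [hsum.tsum_eq_zero_add]
      simp only [e]
      simp [I1]
    rw [hs]
    exact key
  · have h := (((hasDerivAt_id w).div_const 2).pow (2*n)).div_const ((n.factorial : ℝ)^2)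
    refine h.congr_deriv ?_
    push_cast
    simp only [id]
    ring
  · have hw' : |w| < 2 := by simpa using hw
    have h1 := fact_one_le n
    have h2 : |w/2|^(2*n-1) ≤ 1 := by
      apply pow_le_one₀ (abs_nonneg _)
      rw [abs_div, abs_two]; linarith
    have h3 : (n:ℝ) ≤ n.factorial := by exact_mod_cast Nat.self_le_factorial n
    rw [Real.norm_eq_abs, abs_div, abs_mul, abs_pow, Nat.abs_cast, abs_of_nonneg (sq_nonneg (n.factorial : ℝ)),
      div_le_div_iff₀ (by positivity) (by positivity)]
    have h4 : (n:ℝ) * |w/2|^(2*n-1) ≤ n.factorial := by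
      have : (0:ℝ) ≤ n := Nat.cast_nonneg n
      nlinarith
    nlinarith

lemma hasDerivAt_pk {t x y : ℝ} (ht : 0 < t) (hx : 0 < x) (hy : 0 < y) (h : x*y ≤ t) :
    HasDerivAt (fun u : ℝ => pk t u y)
      (t⁻¹ * Real.exp (-(x^2 + y^2)/(2*t)) * (y/t * I1 (x*y/t) - x/t * I0 (x*y/t))) x := by
  have hz : 0 ≤ x*y/t := by positivity
  have hz1 : x*y/t ≤ 1 := by rw [div_le_one ht]; exact h
  have hI := hasDerivAt_I0 hz (by linarith)
  have h1 : HasDerivAt (fun u : ℝ => u*y/t) (y/t) x := by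
    simpa using ((hasDerivAt_id x).mul_const y).div_const t
  have h2 : HasDerivAt (fun u : ℝ => -(u^2 + y^2)/(2*t)) (-x/t) x := by
    have := (((hasDerivAt_pow 2 x).add_const (y^2)).neg).div_const (2*t)
    refine this.congr_deriv ?_
    push_cast
    field_simp
  have h3 := hI.comp x h1
  have h4 := (h2.exp.const_mul t⁻¹).mul h3
  unfold pk
  refine h4.congr_deriv ?_
  simp only [Function.comp]
  ring

theorem bessel_heat_kernel_derivative_estimate :
    ∀ t x y : ℝ, 0 < t → 0 < x → 0 < y → x*y ≤ t → 4*t ≤ y^2 →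
      (1/12) * x * (y/t)^2 * pk t x y ≤ deriv (fun u : ℝ => pk t u y) x ∧
      deriv (fun u : ℝ => pk t u y) x ≤ 2 * x * (y/t)^2 * pk t x y := by
  intro t x y ht hx hy hxy hyt
  rw [(hasDerivAt_pk ht hx hy hxy).deriv]
  unfold pk
  have hz : 0 < x*y/t := by positivity
  have hz1 : x*y/t ≤ 1 := by rw [div_le_one ht]; exact hxy
  have hU := I1_le hz.le (by linarith)
  have hL := le_I1 hz.le (by linarith)
  have hI := I0_le hz.le hz1
  have hI0 := I0_nonneg (x*y/t)
  have hxt : x/t ≤ (y/t) * ((x*y/t)/4) := by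
    have : x/t = (x/t) * (4*t) / (4*t) := by field_simp
    rw [this, show (y/t) * ((x*y/t)/4) = (x/t)*y^2/(4*t) by field_simp]
    gcongr
  have hx0 : 0 ≤ x/t := by positivity
  have hE : 0 ≤ t⁻¹ * Real.exp (-(x^2 + y^2)/(2*t)) := by positivity
  have hy0 : 0 < y/t := by positivity
  have e : x * (y/t)^2 = (y/t) * (x*y/t) := by field_simp
  generalize t⁻¹ * Real.exp (-(x^2 + y^2)/(2*t)) = E at *
  generalize I1 (x*y/t) = J at *
  generalize I0 (x*y/t) = K at *
  rw [mul_assoc (1/12) x, mul_assoc 2 x, e]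
  generalize x*y/t = z at *
  generalize y/t = a at *
  generalize x/t = b at *
  have hbK : b * K ≤ a * (z/4) * K := mul_le_mul_of_nonneg_right hxt hI0
  have hbK0 : 0 ≤ b * K := mul_nonneg hx0 hI0
  constructor
  · have : a * (z/3*K) ≤ a * J := mul_le_mul_of_nonneg_left (by nlinarith) hy0.le
    nlinarith [mul_le_mul_of_nonneg_left (show 1/12*(a*z)*K ≤ a*J - b*K by nlinarith) hE]
  · have h1 : a * J ≤ a * (z/2*K) := mul_le_mul_of_nonneg_left hU hy0.le
    have h2 : 0 ≤ a * z * K := by positivity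
    nlinarith [mul_le_mul_of_nonneg_left (show a*J - b*K ≤ 2*(a*z)*K by nlinarith) hE]
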